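/- arXiv:1209.6119 — 2 statements merged into one kernel-verified Lean document; each statement's English description precedes it below -/
import Mathlib

section
/- Let n, m ≥ 1 and let v₁, …, v_m ∈ ℤⁿ be such that 0 lies in the interior of the convex hull P = conv{v₁, …, v_m} ⊆ ℝⁿ. Let L ⊆ ℚᵐ be the linear subspace consisting of all vectors (⟨ν, v₁⟩, …, ⟨ν, v_m⟩) as ν ranges over ℚ-linear functionals on ℚⁿ. Fix an index i ∈ {1, …, m} and let T = { l : v_l is not an extreme point of P }. Then the images in the quotient vector space ℚᵐ/L of the standard basis vectors e_l, for l ∈ T ∪ {i}, form a linearly independent family. -/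
/-- The linear map sending a `ℚ`-linear functional `ν` on `ℚⁿ` to the vector
`(⟨ν, v₁⟩, …, ⟨ν, v_m⟩) ∈ ℚᵐ`, where `v₁, …, v_m ∈ ℤⁿ` are viewed inside `ℚⁿ`. -/
def evalOnRays (n m : ℕ) (v : Fin m → Fin n → ℤ) :
    ((Fin n → ℚ) →ₗ[ℚ] ℚ) →ₗ[ℚ] (Fin m → ℚ) where
  toFun ν := fun l => ν (fun k => (v l k : ℚ))
  map_add' _ _ := rfl
  map_smul' _ _ := rfl

open Matrix in
/-- A functional that is nonnegative on the extreme points of a compact convex set with `0` in the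
interior vanishes. -/
lemma eq_zero_of_nonneg_extreme {n : ℕ} {P : Set (Fin n → ℝ)} (hP : IsCompact P)
    (hc : Convex ℝ P) (h0 : (0 : Fin n → ℝ) ∈ interior P) (w : Fin n → ℝ)
    (hw : ∀ x ∈ Set.extremePoints ℝ P, 0 ≤ w ⬝ᵥ x) : w = 0 := by
  have hcl : IsClosed {x : Fin n → ℝ | 0 ≤ w ⬝ᵥ x} :=
    isClosed_le continuous_const (by unfold dotProduct; fun_prop)
  have hconv : Convex ℝ {x : Fin n → ℝ | 0 ≤ w ⬝ᵥ x} := by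
    intro x hx y hy a b ha hb _
    simp only [Set.mem_ofPred_eq, dotProduct_add, dotProduct_smul, smul_eq_mul] at *
    positivity
  have hsub : P ⊆ {x : Fin n → ℝ | 0 ≤ w ⬝ᵥ x} := by
    rw [← closure_convexHull_extremePoints hP hc]
    exact closure_minimal (convexHull_min hw hconv) hcl
  have hev : ∀ᶠ t : ℝ in nhds 0, (-t) • w ∈ P := by
    have hcont : Filter.Tendsto (fun t : ℝ => (-t) • w) (nhds 0) (nhds 0) := by
      have : Continuous (fun t : ℝ => (-t) • w) := by fun_prop
      simpa using this.tendsto 0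
    exact hcont (mem_interior_iff_mem_nhds.1 h0)
  obtain ⟨t, ht, htP⟩ :=
    ((hev.filter_mono nhdsWithin_le_nhds).and self_mem_nhdsWithin :
      ∀ᶠ t : ℝ in nhdsWithin 0 (Set.Ioi 0), (-t) • w ∈ P ∧ t ∈ Set.Ioi (0 : ℝ)).exists
  have h1 := hsub ht
  simp only [Set.mem_ofPred_eq, dotProduct_smul, smul_eq_mul] at h1
  have htP : 0 < t := htP
  have h2 : 0 ≤ w ⬝ᵥ w := Finset.sum_nonneg fun k _ => mul_self_nonneg _
  have h3 : w ⬝ᵥ w = 0 := by nlinarith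
  exact dotProduct_self_eq_zero.1 h3

open Matrix in
/-- Let `n, m ≥ 1` and `v₁, …, v_m ∈ ℤⁿ` with `0` in the interior of
`P = conv{v₁, …, v_m} ⊆ ℝⁿ`.  Let `L ⊆ ℚᵐ` be the subspace of vectors
`(⟨ν, v₁⟩, …, ⟨ν, v_m⟩)` for `ℚ`-linear functionals `ν` on `ℚⁿ`.  Fix `i` and let
`T = {l : v_l is not an extreme point of P}`.  Then the images in `ℚᵐ/L` of the standard
basis vectors `e_l`, `l ∈ T ∪ {i}`, form a linearly independent family. -/
theorem batyrev_classes_linearly_independent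
    (n m : ℕ) (hn : 1 ≤ n) (hm : 1 ≤ m) (v : Fin m → Fin n → ℤ)
    (h0 : (0 : Fin n → ℝ) ∈
      interior (convexHull ℝ (Set.range fun l => fun k => ((v l k : ℝ)))))
    (i : Fin m) :
    LinearIndependent ℚ
      (fun l : ({l : Fin m | (fun k => ((v l k : ℝ))) ∉
          Set.extremePoints ℝ (convexHull ℝ (Set.range fun l => fun k => ((v l k : ℝ))))}
            ∪ {i} : Set (Fin m)) =>
        (Submodule.Quotient.mk (Pi.single (l : Fin m) (1 : ℚ)) :
          (Fin m → ℚ) ⧸ LinearMap.range (evalOnRays n m v))) := by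
  set V : Fin m → Fin n → ℝ := fun l => fun k => ((v l k : ℝ)) with hV
  set P := convexHull ℝ (Set.range V) with hPdef
  set S : Set (Fin m) := {l : Fin m | V l ∉ Set.extremePoints ℝ P} ∪ {i} with hS
  have hPc : IsCompact P := (Set.finite_range V).isCompact_convexHull (𝕜 := ℝ)
  have hPconv : Convex ℝ P := convex_convexHull ℝ _
  have hli : LinearIndependent ℚ (fun l : S => (Pi.single (l : Fin m) (1 : ℚ) : Fin m → ℚ)) := by
    have := (Pi.basisFun ℚ (Fin m)).linearIndependent.comp (fun l : S => (l : Fin m))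
      Subtype.val_injective
    convert this using 2 with l
    simp
  refine hli.map (f := (LinearMap.range (evalOnRays n m v)).mkQ) ?_
  rw [Submodule.ker_mkQ, Submodule.disjoint_def]
  rintro _ hx ⟨ν, rfl⟩
  have hvan : ∀ l, l ∉ S → evalOnRays n m v ν l = 0 := by
    intro l hl
    generalize evalOnRays n m v ν = y at hx
    induction hx using Submodule.span_induction with
    | mem x hx =>
      obtain ⟨j, rfl⟩ := hx
      exact Pi.single_eq_of_ne (fun h : l = (j : Fin m) => hl (h ▸ j.2)) _
    | zero => rfl
    | add x y _ _ hx hy => simp [hx, hy]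
    | smul a x _ hx => simp [hx]
  let w : Fin n → ℝ := fun k => ((ν (Pi.single k 1) : ℚ) : ℝ)
  have hwV : ∀ l, w ⬝ᵥ V l = ((evalOnRays n m v ν l : ℚ) : ℝ) := by
    intro l
    have : evalOnRays n m v ν l = ∑ k, (v l k : ℚ) * ν (Pi.single k 1) := by
      change ν (fun k => (v l k : ℚ)) = _
      rw [LinearMap.pi_apply_eq_sum_univ ν]
      simp only [smul_eq_mul]
      refine Finset.sum_congr rfl fun k _ => ?_
      congr 2
      ext j
      simp [Pi.single_apply, eq_comm]
    rw [this]
    simp only [dotProduct, w, hV]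
    push_cast
    exact Finset.sum_congr rfl fun k _ => mul_comm _ _
  have hext : ∀ x ∈ Set.extremePoints ℝ P, w ⬝ᵥ x = 0 ∨ x = V i := by
    intro x hx
    obtain ⟨l, rfl⟩ := extremePoints_convexHull_subset hx
    by_cases hl : l = i
    · right; rw [hl]
    · left
      rw [hwV, hvan l (by simp [hS, hl, hx]), Rat.cast_zero]
  have hw0 : w = 0 := by
    rcases le_total 0 (w ⬝ᵥ V i) with h | h
    · refine eq_zero_of_nonneg_extreme hPc hPconv h0 w fun x hx => ?_
      rcases hext x hx with h' | rfl
      · exact h'.ge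
      · exact h
    · refine neg_eq_zero.1 (eq_zero_of_nonneg_extreme hPc hPconv h0 (-w) fun x hx => ?_)
      rw [neg_dotProduct]
      rcases hext x hx with h' | rfl
      · simp [h']
      · linarith
  funext l
  have := hwV l
  rw [hw0, zero_dotProduct] at this
  exact_mod_cast this.symm
end

section
/- Let n, m ≥ 1, let v₁, …, v_m ∈ ℤⁿ, and let M be a vector space over ℚ. Suppose A₁, …, A_m ∈ M satisfy: (i) A_l = 0 for every l such that v_l is an extreme point of the convex hull conv{v₁, …, v_m} ⊆ ℝⁿ; and (ii) for every integer vector d = (d₁, …, d_m) ∈ ℤᵐ with Σ_{l=1}^m d_l · v_l = 0 in ℤⁿ, one has Σ_{l=1}^m d_l · A_l = 0 in M. Then A_l = 0 for all l = 1, …, m. -/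
theorem rat_relations_aux {n m : ℕ} (v : Fin m → Fin n → ℤ)
    {M : Type*} [AddCommGroup M] [Module ℚ M] (A : Fin m → M)
    (h2 : ∀ d : Fin m → ℤ, (∑ l, d l • v l) = 0 → (∑ l, d l • A l) = 0)
    (q : Fin m → ℚ) (hq : ∀ k, ∑ l, q l * (v l k : ℚ) = 0) : ∑ l, q l • A l = 0 := by
  obtain ⟨b, hb⟩ := IsLocalization.exist_integer_multiples_of_finite (nonZeroDivisors ℤ) q
  choose d hd using hb
  have hd' : ∀ l, (d l : ℚ) = (b : ℤ) * q l := by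
    intro l
    have := hd l
    simpa [zsmul_eq_mul] using this
  have hb0 : ((b : ℤ) : ℚ) ≠ 0 := by
    exact_mod_cast nonZeroDivisors.coe_ne_zero b
  have h := h2 d (by
    ext k
    have : ((∑ l, d l * v l k : ℤ) : ℚ) = 0 := by
      push_cast
      simp only [hd', mul_assoc]
      rw [← Finset.mul_sum, hq, mul_zero]
    simpa using (by exact_mod_cast this : ∑ l, d l * v l k = 0))
  have h' : ((b : ℤ) : ℚ) • ∑ l, q l • A l = 0 := by
    rw [Finset.smul_sum, ← h]
    refine Finset.sum_congr rfl fun l _ => ?_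
    rw [smul_smul, ← hd', Int.cast_smul_eq_zsmul]
  exact (smul_eq_zero.mp h').resolve_left hb0

/-- Let `n, m ≥ 1`, `v₁, …, v_m ∈ ℤⁿ`, and let `M` be a `ℚ`-vector space.
Suppose `A₁, …, A_m ∈ M` satisfy: (i) `A_l = 0` whenever `v_l` is an extreme point of
`conv{v₁, …, v_m} ⊆ ℝⁿ`; (ii) for every `d ∈ ℤᵐ` with `Σ_l d_l • v_l = 0` in `ℤⁿ` one has
`Σ_l d_l • A_l = 0` in `M`.  Then `A_l = 0` for all `l`. -/
theorem vanishing_from_relations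
    (n m : ℕ) (hn : 1 ≤ n) (hm : 1 ≤ m) (v : Fin m → Fin n → ℤ)
    (M : Type*) [AddCommGroup M] [Module ℚ M] (A : Fin m → M)
    (h1 : ∀ l : Fin m,
      (fun k => ((v l k : ℝ))) ∈
        Set.extremePoints ℝ (convexHull ℝ (Set.range fun j => fun k => ((v j k : ℝ)))) →
      A l = 0)
    (h2 : ∀ d : Fin m → ℤ, (∑ l, d l • v l) = 0 → (∑ l, d l • A l) = 0) :
    ∀ l, A l = 0 := by
    classical
  intro l
  set w : Fin m → Fin n → ℝ := fun j => fun k => ((v j k : ℝ)) with hw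
  set C := convexHull ℝ (Set.range w) with hC
  set u : Fin m → Fin n → ℚ := fun j k => (v j k : ℚ) with hu
  set E : Set (Fin m) := {j | w j ∈ Set.extremePoints ℝ C} with hE
  have hsub : Set.extremePoints ℝ C ⊆ Set.range w := extremePoints_convexHull_subset
  have hfin : (Set.extremePoints ℝ C).Finite := (Set.finite_range w).subset hsub
  have hKM : convexHull ℝ (Set.extremePoints ℝ C) = C := by
    have := closure_convexHull_extremePoints
      ((Set.finite_range w).isCompact_convexHull ℝ) (convex_convexHull ℝ (Set.range w))
    rwa [(hfin.isClosed_convexHull ℝ).closure_eq] at this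
  have hmem : u l ∈ Submodule.span ℚ (u '' E) := by
    by_contra hcon
    obtain ⟨f, hf0, hf⟩ := Submodule.exists_le_ker_of_notMem hcon
    let c : Fin n → ℚ := fun k => f (Pi.single k 1)
    have hfc : ∀ x, f x = ∑ k, x k * c k := by
      intro x
      rw [LinearMap.pi_apply_eq_sum_univ f x]
      refine Finset.sum_congr rfl fun k _ => ?_
      simp only [smul_eq_mul, c]
      congr 2
      ext j
      simp [Pi.single_apply, eq_comm]
    let g : (Fin n → ℝ) →ₗ[ℝ] ℝ := ∑ k, (c k : ℝ) • LinearMap.proj k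
    have hg : ∀ j, g (w j) = (f (u j) : ℝ) := by
      intro j
      rw [hfc]
      simp [g, hw, hu, mul_comm]
    have hle : convexHull ℝ (Set.extremePoints ℝ C) ⊆ (LinearMap.ker g : Set (Fin n → ℝ)) := by
      refine convexHull_min ?_ (LinearMap.ker g).convex
      intro x hx
      obtain ⟨j, rfl⟩ := hsub hx
      have : f (u j) = 0 := hf (Submodule.subset_span ⟨j, hx, rfl⟩)
      simp [hg, this]
    rw [hKM] at hle
    have h0 : g (w l) = 0 := hle (subset_convexHull ℝ _ ⟨l, rfl⟩)
    rw [hg] at h0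
    exact hf0 (by exact_mod_cast h0)
  rw [Finsupp.mem_span_image_iff_linearCombination] at hmem
  obtain ⟨p, hp, hpl⟩ := hmem
  rw [Finsupp.linearCombination_apply, Finsupp.sum_fintype _ _ (by simp)] at hpl
  have hkey := rat_relations_aux v A h2 (fun j => p j - if j = l then 1 else 0) (by
    intro k
    have := congrFun hpl k
    simp [hu] at this
    simp [sub_mul, Finset.sum_sub_distrib, this])
  have hz : ∑ j, p j • A j = 0 := by
    refine Finset.sum_eq_zero fun j _ => ?_
    by_cases hj : p j = 0
    · simp [hj]
    · rw [h1 j (hp (Finsupp.mem_support_iff.mpr hj)), smul_zero]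
  simpa [sub_smul, Finset.sum_sub_distrib, hz, ite_smul] using hkey
end
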